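/- arXiv:1804.01325 — 3 statements merged into one kernel-verified Lean document; each statement's English description precedes it below -/
import Mathlib

section
/- The s×s matrix τᵀ R τ is positive definite, and τᵀ R τ = 2 x̄ᵀ L x̄ + (8/n)(Σ_{i=1}^n X_{ii} − I_s), where x̄ = X̄ (1 ⊗ I_s). -/
open Matrix Finset
open scoped Kronecker

noncomputable section

/-- The `ns × s` matrix `1 ⊗ Iₛ`, where `1` is the all-ones column vector. -/
def oneKron (n s : ℕ) : Matrix (Fin n × Fin s) (Fin s) ℝ :=
  Matrix.of fun p b => if p.2 = b then 1 else 0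

/-- The `ns × ns` matrix `J ⊗ Iₛ`, where `J` is the all-ones matrix. -/
def JKron (n s : ℕ) : Matrix (Fin n × Fin s) (Fin n × Fin s) ℝ :=
  (Matrix.of fun _ _ : Fin n => (1 : ℝ)) ⊗ₖ (1 : Matrix (Fin s) (Fin s) ℝ)

/-- The Laplacian matrix of a graph whose edges `{i,j}` are weighted by
positive definite `s × s` matrices `W i j`: the `(i,i)` block is
`Σ_{j ∼ i} (W i j)⁻¹`, the `(i,j)` block for `i ≠ j` is `-(W i j)⁻¹` if `i ∼ j`
and `0` otherwise. -/
def lap {n s : ℕ} (G : SimpleGraph (Fin n)) [DecidableRel G.Adj]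
    (W : Fin n → Fin n → Matrix (Fin s) (Fin s) ℝ) :
    Matrix (Fin n × Fin s) (Fin n × Fin s) ℝ :=
  Matrix.of fun p q =>
    if p.1 = q.1 then (∑ k ∈ univ.filter (fun k => G.Adj p.1 k), (W p.1 k)⁻¹) p.2 q.2
    else if G.Adj p.1 q.1 then -((W p.1 q.1)⁻¹ p.2 q.2) else 0

/-- The four Penrose conditions: `Adag` is a Moore–Penrose inverse of `A`. -/
def IsMoorePenrose {m : Type*} [Fintype m] (A Adag : Matrix m m ℝ) : Prop :=
  A * Adag * A = A ∧ Adag * A * Adag = Adag ∧ (A * Adag)ᵀ = A * Adag ∧ (Adag * A)ᵀ = Adag * A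

/-- The `s × s` block of an `ns × ns` matrix in block position `(i, j)`. -/
def blk {n s : ℕ} (A : Matrix (Fin n × Fin s) (Fin n × Fin s) ℝ) (i j : Fin n) :
    Matrix (Fin s) (Fin s) ℝ :=
  Matrix.of fun a b => A (i, a) (j, b)

/-- The resistance matrix built from a Moore–Penrose inverse `Ldag` of the Laplacian:
its `(i,j)` block is `K_{ii} + K_{jj} - 2 K_{ij}`, where `K_{ij}` are the blocks of `Ldag`. -/
def resist {n s : ℕ} (Ldag : Matrix (Fin n × Fin s) (Fin n × Fin s) ℝ) :
    Matrix (Fin n × Fin s) (Fin n × Fin s) ℝ :=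
  Matrix.of fun p q =>
    Ldag (p.1, p.2) (p.1, q.2) + Ldag (q.1, p.2) (q.1, q.2) - 2 * Ldag p q

/-- The `ns × s` matrix `τ`, whose `i`-th block is `2 Iₛ - Σ_{j ∼ i} (W i j)⁻¹ R_{ji}`. -/
def tauMat {n s : ℕ} (G : SimpleGraph (Fin n)) [DecidableRel G.Adj]
    (W : Fin n → Fin n → Matrix (Fin s) (Fin s) ℝ)
    (R : Matrix (Fin n × Fin s) (Fin n × Fin s) ℝ) :
    Matrix (Fin n × Fin s) (Fin s) ℝ :=
  Matrix.of fun p b =>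
    ((2 : ℝ) • (1 : Matrix (Fin s) (Fin s) ℝ) -
      ∑ j ∈ univ.filter (fun j => G.Adj p.1 j), (W p.1 j)⁻¹ * blk R j p.1) p.2 b

/-- The block diagonal matrix `X̄` with the same diagonal blocks as `X`. -/
def bdiag {n s : ℕ} (X : Matrix (Fin n × Fin s) (Fin n × Fin s) ℝ) :
    Matrix (Fin n × Fin s) (Fin n × Fin s) ℝ :=
  Matrix.of fun p q => if p.1 = q.1 then X (p.1, p.2) (p.1, q.2) else 0

theorem aux_one_tr_one (n s : ℕ) : (oneKron n s)ᵀ * oneKron n s = (n : ℝ) • (1 : Matrix (Fin s) (Fin s) ℝ) := by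
  ext a b
  simp only [Matrix.mul_apply, oneKron, Matrix.transpose_apply, Matrix.of_apply, Matrix.smul_apply,
    Fintype.sum_prod_type, Matrix.one_apply, smul_eq_mul]
  by_cases hab : a = b
  · simp [hab]
  · simp [hab, Ne.symm hab]

theorem aux_J (n s : ℕ) : JKron n s = oneKron n s * (oneKron n s)ᵀ := by
  ext p q
  simp only [JKron, Matrix.mul_apply, oneKron, Matrix.transpose_apply, Matrix.of_apply,
    Matrix.kroneckerMap_apply, Matrix.one_apply]
  simp [eq_comm]

theorem aux_tau {n s : ℕ} (G : SimpleGraph (Fin n)) [DecidableRel G.Adj]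
    (W : Fin n → Fin n → Matrix (Fin s) (Fin s) ℝ)
    (R : Matrix (Fin n × Fin s) (Fin n × Fin s) ℝ) (hR : ∀ i a b, R (i, a) (i, b) = 0)
    (p : Fin n × Fin s) (b : Fin s) :
    tauMat G W R p b = (if p.2 = b then 2 else 0) + (lap G W * R) p (p.1, b) := by
  obtain ⟨i, a⟩ := p
  have key : ∀ j : Fin n, ∑ c, lap G W (i, a) (j, c) * R (j, c) (i, b) =
      if G.Adj i j then - ((W i j)⁻¹ * blk R j i) a b else 0 := by
    intro j
    by_cases hij : i = j
    · subst hij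
      simp [hR]
    · by_cases hadj : G.Adj i j
      · simp [lap, hij, hadj, Matrix.mul_apply, blk]
      · simp [lap, hij, hadj]
  rw [Matrix.mul_apply, Fintype.sum_prod_type]
  simp only [key]
  rw [← Finset.sum_filter]
  simp only [tauMat, Matrix.of_apply, Matrix.sub_apply, Matrix.smul_apply, Matrix.one_apply,
    Matrix.sum_apply, Finset.sum_neg_distrib]
  simp [sub_eq_add_neg]

/-- `τᵀ R τ` is positive definite and equals
`2 x̄ᵀ L x̄ + (8/n)(Σᵢ X_{ii} - Iₛ)`, where `x̄ = X̄ (1 ⊗ Iₛ)`. -/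
theorem tau_transpose_resist_tau_posDef
    (n s : ℕ) (hn : 2 ≤ n) (hs : 1 ≤ s)
    (G : SimpleGraph (Fin n)) [DecidableRel G.Adj] (hconn : G.Connected)
    (W : Fin n → Fin n → Matrix (Fin s) (Fin s) ℝ)
    (hWsymm : ∀ i j, W i j = W j i)
    (hWpd : ∀ i j, G.Adj i j → (W i j).PosDef)
    (hPSD : (lap G W).PosSemidef)
    (hrank : (lap G W).rank = n * s - s)
    (hker : ∀ v : Fin n × Fin s → ℝ,
      lap G W *ᵥ v = 0 ↔ ∃ c : Fin s → ℝ, v = oneKron n s *ᵥ c)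
    (X : Matrix (Fin n × Fin s) (Fin n × Fin s) ℝ)
    (hX : X = (lap G W + ((n : ℝ)⁻¹) • JKron n s)⁻¹)
    (Ldag : Matrix (Fin n × Fin s) (Fin n × Fin s) ℝ)
    (hMP : IsMoorePenrose (lap G W) Ldag)
    (R : Matrix (Fin n × Fin s) (Fin n × Fin s) ℝ)
    (hR : R = resist Ldag)
    (xbar : Matrix (Fin n × Fin s) (Fin s) ℝ)
    (hxbar : xbar = bdiag X * oneKron n s) :
    ((tauMat G W R)ᵀ * R * tauMat G W R).PosDef ∧
      (tauMat G W R)ᵀ * R * tauMat G W R =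
        (2 : ℝ) • (xbarᵀ * lap G W * xbar) +
          ((8 : ℝ) / n) • (∑ i : Fin n, blk X i i - 1) := by
  have hn0 : (n : ℝ) ≠ 0 := by
    have : n ≠ 0 := by omega
    exact_mod_cast this
  obtain ⟨h1, h2, h3, h4⟩ := hMP
  rw [aux_J] at hX
  set L := lap G W with hL
  set E := oneKron n s with hE
  have hEE : Eᵀ * E = (n : ℝ) • (1 : Matrix (Fin s) (Fin s) ℝ) := aux_one_tr_one n s
  have hLT : Lᵀ = L := by
    have := hPSD.1
    rwa [Matrix.IsHermitian, Matrix.conjTranspose_eq_transpose_of_trivial] at this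
  have hLE : L * E = 0 := by
    ext p b
    have h := (hker (E *ᵥ Pi.single b 1)).2 ⟨_, rfl⟩
    have h' := congrFun h p
    rw [Matrix.mulVec_mulVec, Matrix.mulVec_single_one] at h'
    exact h'
  have hEL : Eᵀ * L = 0 := by
    have := congrArg Matrix.transpose hLE
    rwa [Matrix.transpose_mul, hLT, Matrix.transpose_zero] at this
  set P := (n : ℝ)⁻¹ • (E * Eᵀ) with hP
  have hPE : P * E = E := by
    rw [hP, Matrix.smul_mul, Matrix.mul_assoc, hEE, Matrix.mul_smul, smul_smul,
      inv_mul_cancel₀ hn0, one_smul, Matrix.mul_one]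
  have hPT : Pᵀ = P := by
    rw [hP, Matrix.transpose_smul, Matrix.transpose_mul, Matrix.transpose_transpose]
  have hLP : L * P = 0 := by
    rw [hP, Matrix.mul_smul, ← Matrix.mul_assoc, hLE, Matrix.zero_mul, smul_zero]
  have hPL : P * L = 0 := by
    rw [hP, Matrix.smul_mul, Matrix.mul_assoc, hEL, Matrix.mul_zero, smul_zero]
  have hPP : P * P = P := by
    conv_lhs => rw [hP]
    rw [← hP, Matrix.mul_smul, ← Matrix.mul_assoc, hPE]
  have hPker : ∀ A : Matrix (Fin n × Fin s) (Fin n × Fin s) ℝ, L * A = 0 → P * A = A := by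
    intro A hA
    ext p q
    have h : L *ᵥ (A.col q) = 0 := by
      funext r
      exact congrFun (congrFun hA r) q
    obtain ⟨c, hc⟩ := (hker _).1 h
    have : P *ᵥ (A.col q) = A.col q := by
      rw [hc, Matrix.mulVec_mulVec, hPE]
    exact congrFun this p
  have hKL : Ldag * L = 1 - P := by
    have a := hPker (1 - Ldag * L) (by
      rw [Matrix.mul_sub, Matrix.mul_one, ← Matrix.mul_assoc, h1, sub_self])
    have b : P * (Ldag * L) = 0 := by
      have := congrArg Matrix.transpose (show (Ldag * L) * P = 0 by
        rw [Matrix.mul_assoc, hLP, Matrix.mul_zero])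
      rwa [Matrix.transpose_mul, h4, hPT, Matrix.transpose_zero] at this
    rw [Matrix.mul_sub, Matrix.mul_one, b, sub_zero] at a
    rw [a]; abel
  have hLK : L * Ldag = 1 - P := by
    have a := hPker (1 - L * Ldag) (by
      have := congrArg Matrix.transpose h1
      rw [Matrix.transpose_mul, h3, hLT] at this
      rw [Matrix.mul_sub, Matrix.mul_one, this, sub_self])
    have b : P * (L * Ldag) = 0 := by
      rw [← Matrix.mul_assoc, hPL, Matrix.zero_mul]
    rw [Matrix.mul_sub, Matrix.mul_one, b, sub_zero] at a
    rw [a]; abel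
  have hPK : P * Ldag = 0 := by
    have := h2
    rw [hKL, Matrix.sub_mul, Matrix.one_mul] at this
    simpa using this
  have hKP : Ldag * P = 0 := by
    have := h2
    rw [Matrix.mul_assoc, hLK, Matrix.mul_sub, Matrix.mul_one] at this
    simpa using this
  have hKTe : Ldagᵀ = Ldagᵀ * L * Ldag := by
    have : Ldagᵀ * P = 0 := by
      have := congrArg Matrix.transpose hPK
      rwa [Matrix.transpose_mul, hPT, Matrix.transpose_zero] at this
    rw [Matrix.mul_assoc, hLK, Matrix.mul_sub, Matrix.mul_one, this, sub_zero]
  have hKT : Ldagᵀ = Ldag := by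
    have := congrArg Matrix.transpose hKTe
    rw [Matrix.transpose_mul, Matrix.transpose_mul, Matrix.transpose_transpose, hLT,
      ← Matrix.mul_assoc, ← hKTe] at this
    exact this.symm
  have hKpsd : Ldag.PosSemidef := by
    have := hPSD.conjTranspose_mul_mul_same Ldag
    rw [Matrix.conjTranspose_eq_transpose_of_trivial, ← hKTe, hKT] at this
    exact this
  have hKE : Ldag * E = 0 := by
    rw [← hPE, ← Matrix.mul_assoc, hKP, Matrix.zero_mul]
  have hXK : X = Ldag + P := by
    rw [hX]
    apply Matrix.inv_eq_right_inv
    rw [Matrix.add_mul, Matrix.mul_add, Matrix.mul_add, hLK, hLP, hPK, hPP]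
    abel
  have hPapp : ∀ p q, P p q = if p.2 = q.2 then (n : ℝ)⁻¹ else 0 := by
    intro p q
    rw [hP, hE, ← aux_J]
    simp [JKron, Matrix.one_apply]
  set k : Matrix (Fin n × Fin s) (Fin s) ℝ := Matrix.of fun p b => Ldag p (p.1, b) with hk
  have hRk : R = k * Eᵀ + E * kᵀ - (2 : ℝ) • Ldag := by
    ext p q
    have hsym : Ldag (q.1, p.2) (q.1, q.2) = Ldag (q.1, q.2) (q.1, p.2) := by
      conv_lhs => rw [← hKT]
      rfl
    rw [hR]
    simp [resist, hk, hE, oneKron, Matrix.mul_apply, hsym]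
  have hxk : xbar = k + (n : ℝ)⁻¹ • E := by
    rw [hxbar]
    ext p b
    rw [hXK]
    simp [bdiag, hk, hE, oneKron, Matrix.mul_apply, hPapp, Fintype.sum_prod_type]
  have hkE : ∑ i, blk Ldag i i = Eᵀ * k := by
    ext a b
    simp [blk, hk, hE, oneKron, Matrix.mul_apply, Fintype.sum_prod_type, Matrix.sum_apply]
  have hkET : kᵀ * E = Eᵀ * k := by
    rw [← hkE]
    ext a b
    have hsym : ∀ i, Ldag (i, b) (i, a) = Ldag (i, a) (i, b) := by
      intro i
      conv_lhs => rw [← hKT]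
      rfl
    simp [blk, hk, hE, oneKron, Matrix.mul_apply, Fintype.sum_prod_type, Matrix.sum_apply, hsym]
  have hXs : ∑ i, blk X i i - 1 = Eᵀ * k := by
    rw [← hkE]
    ext a b
    simp only [hXK, blk, Matrix.sum_apply, Matrix.sub_apply, Matrix.of_apply, Matrix.add_apply,
      hPapp, Finset.sum_add_distrib, Matrix.one_apply]
    by_cases hab : a = b <;> simp [hab, hn0]
  have hLR : L * R = L * k * Eᵀ - (2 : ℝ) • (1 - P) := by
    rw [hRk, Matrix.mul_sub, Matrix.mul_add, ← Matrix.mul_assoc, ← Matrix.mul_assoc, hLE,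
      Matrix.zero_mul, add_zero, Matrix.mul_smul, hLK]
  have htau : tauMat G W R = L * k + (2 * (n : ℝ)⁻¹) • E := by
    ext p b
    rw [aux_tau G W R (by
      intro i a b
      rw [hR]
      simp only [resist, Matrix.of_apply]
      ring), ← hL, hLR]
    have e1 : (L * k * Eᵀ) p (p.1, b) = (L * k) p b := by
      rw [Matrix.mul_apply]
      simp [hE, oneKron]
    rw [Matrix.sub_apply, e1]
    simp only [Matrix.sub_apply, Matrix.smul_apply, Matrix.add_apply, hPapp, Matrix.one_apply,
      smul_eq_mul, hE, oneKron, Matrix.of_apply, Prod.ext_iff]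
    by_cases hab : p.2 = b <;> simp [hab]
    ring
  have hEtau : Eᵀ * tauMat G W R = (2 : ℝ) • 1 := by
    rw [htau, Matrix.mul_add, ← Matrix.mul_assoc, hEL, Matrix.zero_mul, zero_add, Matrix.mul_smul,
      hEE, smul_smul, mul_assoc, inv_mul_cancel₀ hn0, mul_one]
  have htauE : (tauMat G W R)ᵀ * E = (2 : ℝ) • 1 := by
    have := congrArg Matrix.transpose hEtau
    rwa [Matrix.transpose_mul, Matrix.transpose_transpose, Matrix.transpose_smul,
      Matrix.transpose_one] at this
  have hktau : kᵀ * tauMat G W R = kᵀ * L * k + (2 * (n : ℝ)⁻¹) • (Eᵀ * k) := by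
    rw [htau, Matrix.mul_add, ← Matrix.mul_assoc, Matrix.mul_smul, hkET]
  have hKtau : Ldag * tauMat G W R = k - (n : ℝ)⁻¹ • (E * (Eᵀ * k)) := by
    rw [htau, Matrix.mul_add, ← Matrix.mul_assoc, hKL, Matrix.mul_smul, hKE, smul_zero, add_zero,
      Matrix.sub_mul, Matrix.one_mul, hP, Matrix.smul_mul, Matrix.mul_assoc]
  have hRtau : R * tauMat G W R = E * (kᵀ * L * k + (4 * (n : ℝ)⁻¹) • (Eᵀ * k)) := by
    have hgen : ∀ T : Matrix (Fin n × Fin s) (Fin s) ℝ, R * T = (k * Eᵀ + E * kᵀ - (2 : ℝ) • Ldag) * T := fun T => by rw [← hRk]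
    rw [hgen, Matrix.sub_mul, Matrix.add_mul, Matrix.mul_assoc, hEtau, Matrix.mul_assoc, hktau,
      Matrix.smul_mul, hKtau, Matrix.mul_add, Matrix.mul_add, Matrix.mul_smul, Matrix.mul_smul,
      Matrix.mul_smul, Matrix.mul_one]
    module
  have hmain : (tauMat G W R)ᵀ * R * tauMat G W R =
      (2 : ℝ) • (kᵀ * L * k) + ((8 : ℝ) / n) • (Eᵀ * k) := by
    rw [Matrix.mul_assoc, hRtau, ← Matrix.mul_assoc, htauE, Matrix.smul_mul, Matrix.one_mul,
      smul_add, smul_smul]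
    congr 2
    ring
  have hxLx : xbarᵀ * L * xbar = kᵀ * L * k := by
    rw [hxk, Matrix.mul_assoc, Matrix.mul_add, Matrix.mul_smul, hLE, smul_zero, add_zero,
      Matrix.transpose_add, Matrix.transpose_smul, Matrix.add_mul, Matrix.smul_mul,
      ← Matrix.mul_assoc, ← Matrix.mul_assoc, hEL, Matrix.zero_mul, smul_zero, add_zero]
  have hSpd : (Eᵀ * k).PosDef := by
    have hblk : ∀ i, (blk Ldag i i).PosSemidef := fun i =>
      hKpsd.submatrix (fun a : Fin s => (i, a))
    rw [← hkE]
    have hSpsd : (∑ i, blk Ldag i i).PosSemidef :=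
      Matrix.posSemidef_sum _ (fun i _ => hblk i)
    refine Matrix.PosDef.of_dotProduct_mulVec_pos hSpsd.1 ?_
    intro c hc
    rcases (hSpsd.dotProduct_mulVec_nonneg c).lt_or_eq with h | h
    · exact h
    exfalso
    apply hc
    rw [Matrix.sum_mulVec, dotProduct_sum, eq_comm,
      Finset.sum_eq_zero_iff_of_nonneg (fun i _ => (hblk i).dotProduct_mulVec_nonneg c)] at h
    let i0 : Fin n := ⟨0, by omega⟩
    let i1 : Fin n := ⟨1, by omega⟩
    have hi : i1 ≠ i0 := by simp [i0, i1]
    have h0 := h i0 (Finset.mem_univ _)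
    let v : Fin n × Fin s → ℝ := fun p => if p.1 = i0 then c p.2 else 0
    have hv : star v ⬝ᵥ (Ldag *ᵥ v) = 0 := by
      rw [← h0]
      simp only [dotProduct, Matrix.mulVec, Fintype.sum_prod_type, v, blk, Pi.star_apply,
        star_trivial, Matrix.of_apply]
      rw [Finset.sum_eq_single i0 (by intro j _ hj; simp [hj]) (by simp)]
      refine Finset.sum_congr rfl fun a _ => ?_
      rw [Finset.sum_eq_single i0 (by intro j _ hj; simp [hj]) (by simp)]
      simp
    rw [hKpsd.dotProduct_mulVec_zero_iff] at hv
    have hv2 : v = P *ᵥ v := by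
      have := congrArg (fun w => L *ᵥ w) hv
      simp only [Matrix.mulVec_mulVec, hLK, Matrix.mulVec_zero, Matrix.sub_mulVec,
        Matrix.one_mulVec] at this
      exact sub_eq_zero.1 this
    have hLv : L *ᵥ v = 0 := by
      rw [hv2, Matrix.mulVec_mulVec, hLP, Matrix.zero_mulVec]
    obtain ⟨d, hd⟩ := (hker v).1 hLv
    funext a
    have e0 := congrFun hd (i0, a)
    have e1 := congrFun hd (i1, a)
    simp [v, hi, hE, oneKron, Matrix.mulVec, dotProduct] at e0 e1
    rw [e0, ← e1]
    rfl
  refine ⟨?_, by rw [hmain, hxLx, hXs]⟩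
  rw [hmain]
  have hk1 : (kᵀ * L * k).PosSemidef := by
    have := hPSD.conjTranspose_mul_mul_same k
    rwa [Matrix.conjTranspose_eq_transpose_of_trivial] at this
  have hnpos : (0 : ℝ) < 8 / n := by
    have : (0 : ℝ) < n := by
      have : 0 < n := by omega
      exact_mod_cast this
    positivity
  exact Matrix.PosDef.posSemidef_add (hk1.smul (by norm_num)) (hSpd.smul hnpos)
end
end

section
/- det R = (−1)^{(n−1)s} · 2^{(n−3)s} · det(τᵀ R τ) / χ(G), where χ(G) = det L(1,1) is the cofactor of any block of L, with L(1,1) the matrix obtained from L by deleting its first block row and first block column (rows and columns 1,…,s). -/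
open Matrix Finset
open scoped Kronecker

noncomputable section

/-- If `LU = 0` in block form, the determinant of `L + n⁻¹ U Uᵀ` is `n^s χ`. -/
theorem aux_detP_block {k m : Type*} [Fintype k] [Fintype m] [DecidableEq k] [DecidableEq m]
    (a : Matrix k k ℝ) (b : Matrix k m ℝ) (c : Matrix m k ℝ) (d : Matrix m m ℝ) (e : Matrix m k ℝ)
    (N : ℝ) (hN : N ≠ 0) (he : eᵀ * e = (N - 1) • (1 : Matrix k k ℝ))
    (h1 : a + b * e = 0) (h2 : c + d * e = 0) (h3 : b + eᵀ * d = 0) :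
    (fromBlocks (a + N⁻¹ • 1) (b + N⁻¹ • eᵀ) (c + N⁻¹ • e) (d + N⁻¹ • (e * eᵀ))).det
      = N ^ Fintype.card k * d.det := by
  have hc : c = -(d * e) := eq_neg_of_add_eq_zero_left h2
  have hb : b = -(eᵀ * d) := eq_neg_of_add_eq_zero_left h3
  have ha : a = eᵀ * d * e := by
    rw [eq_neg_of_add_eq_zero_left h1, hb]; simp
  have key : fromBlocks 1 eᵀ 0 1 *
      fromBlocks (a + N⁻¹ • 1) (b + N⁻¹ • eᵀ) (c + N⁻¹ • e) (d + N⁻¹ • (e * eᵀ)) =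
      fromBlocks 1 eᵀ (c + N⁻¹ • e) (d + N⁻¹ • (e * eᵀ)) := by
    rw [fromBlocks_multiply]
    congr 1
    · simp only [Matrix.mul_add, hc, ha, Matrix.mul_smul, he, Matrix.one_mul, Matrix.mul_neg, Matrix.mul_assoc]
      match_scalars <;> (try field_simp) <;> (try ring)
    · simp only [Matrix.mul_add, hb, Matrix.mul_smul, ← Matrix.mul_assoc, he, Matrix.smul_mul,
        Matrix.one_mul]
      match_scalars <;> (try field_simp) <;> (try ring)
    · simp
    · simp
  have h := congrArg det key
  rw [det_mul, det_fromBlocks_zero₂₁, det_one, det_one, one_mul, one_mul, det_fromBlocks_one₁₁] at h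
  rw [h]
  have : d + N⁻¹ • (e * eᵀ) - (c + N⁻¹ • e) * eᵀ = d * (1 + e * eᵀ) := by
    rw [hc, Matrix.add_mul, Matrix.smul_mul, Matrix.mul_add, Matrix.neg_mul, Matrix.mul_one,
      Matrix.mul_assoc]
    abel
  rw [this, det_mul, det_one_add_mul_comm, he]
  have : (1 : Matrix k k ℝ) + (N - 1) • 1 = N • 1 := by module
  rw [this, det_smul, det_one]
  ring

theorem aux_det_main {k m : Type*} [Fintype k] [Fintype m] [DecidableEq k] [DecidableEq m]
    (X U Z : Matrix m k ℝ) (A S : Matrix k k ℝ) (N : ℝ) (hN : N ≠ 0)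
    (h1 : Uᵀ * X = A) (h2 : Uᵀ * U = N • 1) (h3 : Zᵀ * U = A + (2 : ℝ) • 1)
    (h4 : N • (Zᵀ * X) = N • S + A * A + (2 : ℝ) • A) :
    ((-2 : ℝ) • (1 : Matrix m m ℝ) + X * Uᵀ + U * Zᵀ).det
      = (-2) ^ Fintype.card m * (1/4) ^ Fintype.card k
        * ((-1 : ℝ) • (N • S + (4 : ℝ) • A)).det := by
  have e1 : (-2 : ℝ) • (1 : Matrix m m ℝ) + X * Uᵀ + U * Zᵀ =
      (-2 : ℝ) • (1 + fromCols X U * fromRows ((-1/2 : ℝ) • Uᵀ) ((-1/2 : ℝ) • Zᵀ)) := by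
    rw [fromCols_mul_fromRows, Matrix.mul_smul, Matrix.mul_smul]
    module
  rw [e1, det_smul, det_one_add_mul_comm, fromRows_mul_fromCols, mul_assoc]
  congr 1
  have e2 : (1 : Matrix (k ⊕ k) (k ⊕ k) ℝ) + fromBlocks (((-1/2 : ℝ) • Uᵀ) * X)
      (((-1/2 : ℝ) • Uᵀ) * U) (((-1/2 : ℝ) • Zᵀ) * X) (((-1/2 : ℝ) • Zᵀ) * U) =
      (1/2 : ℝ) • fromBlocks ((2:ℝ) • 1 - A) (-(N • 1)) (-(Zᵀ * X)) (-A) := by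
    rw [← fromBlocks_one, fromBlocks_add, fromBlocks_smul]
    simp only [Matrix.smul_mul, h1, h2, h3]
    congr 1 <;> module
  have e3 : fromBlocks ((2:ℝ) • 1 - A) (-(N • 1)) (-(Zᵀ * X)) (-A) *
      fromBlocks 1 0 (N⁻¹ • (1 - A)) 1 =
      fromBlocks 1 (-(N • 1)) (-(Zᵀ * X) - N⁻¹ • (A - A * A)) (-A) := by
    rw [fromBlocks_multiply]
    congr 1
    · simp only [Matrix.mul_one, Matrix.neg_mul, Matrix.smul_mul, Matrix.one_mul, smul_smul,
        mul_inv_cancel₀ hN]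
      module
    · simp
    · simp only [Matrix.mul_one, Matrix.neg_mul, Matrix.mul_smul, Matrix.mul_sub]
      module
    · simp
  have h := congrArg det e3
  rw [det_mul, det_fromBlocks_zero₁₂, det_one, one_mul, mul_one, det_fromBlocks_one₁₁] at h
  rw [e2, det_smul, h]
  have e4 : -A - (-(Zᵀ * X) - N⁻¹ • (A - A * A)) * -(N • 1) =
      (-1 : ℝ) • (N • S + (4 : ℝ) • A) := by
    simp only [Matrix.mul_neg, Matrix.mul_smul, Matrix.mul_one, smul_sub, smul_neg, h4, smul_smul,
      mul_inv_cancel₀ hN]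
    module
  rw [e4, Fintype.card_sum, pow_add, ← mul_pow]
  norm_num

theorem aux_MP {m k : Type*} [Fintype m] [Fintype k] [DecidableEq m] [DecidableEq k]
    (L K : Matrix m m ℝ) (U : Matrix m k ℝ) (N : ℝ) (hN : N ≠ 0)
    (hL : Lᵀ = L) (hMP : IsMoorePenrose L K) (hUU : Uᵀ * U = N • 1)
    (hker : ∀ v : m → ℝ, L *ᵥ v = 0 ↔ ∃ c : k → ℝ, v = U *ᵥ c) :
    L * U = 0 ∧ K * U = 0 ∧ Kᵀ = K ∧ L * K = 1 - N⁻¹ • (U * Uᵀ) ∧ K * L = 1 - N⁻¹ • (U * Uᵀ) := by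
  obtain ⟨p1, p2, p3, p4⟩ := hMP
  have hLU : L * U = 0 := by
    ext i j
    have := (hker (U *ᵥ Pi.single j 1)).2 ⟨_, rfl⟩
    have := congrFun this i
    rw [Matrix.mulVec_single_one] at this
    exact this
  have hUL : Uᵀ * L = 0 := by
    have := congrArg transpose hLU
    simpa [hL] using this
  have cols : ∀ Y : Matrix m m ℝ, L * Y = 0 → ∃ C : Matrix k m ℝ, Y = U * C := by
    intro Y hY
    have : ∀ j, ∃ c : k → ℝ, (fun i => Y i j) = U *ᵥ c := by
      intro j
      apply (hker _).1
      ext i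
      exact congrFun (congrFun hY i) j
    choose c hc using this
    refine ⟨of fun a j => c j a, ?_⟩
    ext i j
    exact congrFun (hc j) i
  have proj : ∀ Q : Matrix m m ℝ, L * (1 - Q) = 0 → Uᵀ * Q = 0 → Q = 1 - N⁻¹ • (U * Uᵀ) := by
    intro Q h1 h2
    obtain ⟨C, hC⟩ := cols _ h1
    have h3 : Uᵀ = N • C := by
      have := congrArg (fun Y => Uᵀ * Y) hC
      simpa [Matrix.mul_sub, h2, ← Matrix.mul_assoc, hUU] using this
    rw [h3, Matrix.mul_smul, smul_smul, inv_mul_cancel₀ hN, one_smul, ← hC]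
    abel
  have hLK : L * K = 1 - N⁻¹ • (U * Uᵀ) := by
    apply proj
    · have := congrArg transpose p1
      rw [transpose_mul, p3, hL] at this
      rw [Matrix.mul_sub, this]; simp
    · rw [← Matrix.mul_assoc, hUL]; simp
  have hKL : K * L = 1 - N⁻¹ • (U * Uᵀ) := by
    apply proj
    · rw [Matrix.mul_sub, ← Matrix.mul_assoc, p1]; simp
    · have : (Uᵀ * (K * L))ᵀ = 0 := by
        rw [transpose_mul, p4, Matrix.mul_assoc, transpose_transpose, hLU]; simp
      simpa using congrArg transpose this
  refine ⟨hLU, ?_, ?_, hLK, hKL⟩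
  · rw [← p2, Matrix.mul_assoc K, hLK, Matrix.mul_assoc, Matrix.sub_mul, Matrix.smul_mul,
      Matrix.mul_assoc, hUU]
    simp [smul_smul, inv_mul_cancel₀ hN]
  · have h1 : L * Kᵀ = L * K := by
      have := p4
      rw [transpose_mul, hL] at this
      rw [this, hKL, hLK]
    have h2 : K = K * L * Kᵀ := by rw [Matrix.mul_assoc, h1, ← Matrix.mul_assoc, p2]
    have h3 := congrArg transpose h2
    rw [transpose_mul, transpose_mul, hL, transpose_transpose, ← Matrix.mul_assoc, ← h2] at h3
    exact h3

/-- The determinant computation in abstract form. -/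
theorem aux_abstract {m k : Type*} [Fintype m] [Fintype k] [DecidableEq m] [DecidableEq k]
    (L K R : Matrix m m ℝ) (U X τ : Matrix m k ℝ) (N : ℝ) (hN : N ≠ 0)
    (hL : Lᵀ = L) (hUU : Uᵀ * U = N • 1)
    (hLU : L * U = 0) (hKU : K * U = 0) (hK : Kᵀ = K)
    (hLK : L * K = 1 - N⁻¹ • (U * Uᵀ)) (hKL : K * L = 1 - N⁻¹ • (U * Uᵀ))
    (hA : Uᵀ * X = Xᵀ * U)
    (hR : R = X * Uᵀ + U * Xᵀ - (2 : ℝ) • K) (hτ : τ = L * X + (2 * N⁻¹) • U) :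
    (L + N⁻¹ • (U * Uᵀ)).det ≠ 0 ∧
    R.det * (L + N⁻¹ • (U * Uᵀ)).det =
      (-2) ^ Fintype.card m * (1/4) ^ Fintype.card k * (-N) ^ Fintype.card k *
        (1/2) ^ Fintype.card k * (τᵀ * R * τ).det := by
  have hUL : Uᵀ * L = 0 := by
    have := congrArg transpose hLU
    simpa [hL] using this
  have hUK : Uᵀ * K = 0 := by
    have := congrArg transpose hKU
    simpa [hK] using this
  constructor
  · have : (L + N⁻¹ • (U * Uᵀ)) * (K + N⁻¹ • (U * Uᵀ)) = 1 := by
      have e1 : L * (U * Uᵀ) = 0 := by rw [← Matrix.mul_assoc, hLU]; simp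
      have e2 : U * Uᵀ * K = 0 := by rw [Matrix.mul_assoc, hUK]; simp
      have e3 : U * Uᵀ * (U * Uᵀ) = N • (U * Uᵀ) := by
        rw [Matrix.mul_assoc, ← Matrix.mul_assoc Uᵀ, hUU]; simp
      simp only [Matrix.add_mul, Matrix.mul_add, Matrix.smul_mul, Matrix.mul_smul, e1, e2, e3, hLK,
        smul_smul, inv_mul_cancel₀ hN]
      simp
    intro h0
    have h := congrArg det this
    rw [det_mul, h0, det_one, zero_mul] at h
    exact zero_ne_one h
  set A := Uᵀ * X with hAdef
  set S := Xᵀ * L * X with hS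
  have hAt : Aᵀ = A := by rw [hAdef, transpose_mul, transpose_transpose, ← hA]
  set Z := L * X + N⁻¹ • (U * A) + (2 * N⁻¹) • U with hZ
  have hZt : Zᵀ = Xᵀ * L + N⁻¹ • (A * Uᵀ) + (2 * N⁻¹) • Uᵀ := by
    simp [hZ, transpose_mul, hL, hAt]
  have eRP : R * (L + N⁻¹ • (U * Uᵀ)) = (-2 : ℝ) • (1 : Matrix m m ℝ) + X * Uᵀ + U * Zᵀ := by
    have e1 : X * Uᵀ * L = 0 := by rw [Matrix.mul_assoc, hUL]; simp
    have e2 : X * Uᵀ * (U * Uᵀ) = N • (X * Uᵀ) := by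
      rw [Matrix.mul_assoc, ← Matrix.mul_assoc Uᵀ, hUU]; simp
    have e3 : U * Xᵀ * (U * Uᵀ) = U * (A * Uᵀ) := by
      rw [hA]; simp only [Matrix.mul_assoc]
    have e4 : K * (U * Uᵀ) = 0 := by rw [← Matrix.mul_assoc, hKU]; simp
    rw [hR, hZt]
    simp only [Matrix.sub_mul, Matrix.add_mul, Matrix.mul_add, Matrix.smul_mul, Matrix.mul_smul,
      e1, e2, e3, e4, hKL, smul_smul, inv_mul_cancel₀ hN, Matrix.mul_assoc U Xᵀ L]
    match_scalars <;> (try field_simp) <;> (try ring)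
  have eRt : R * τ = U * (S + (4 * N⁻¹) • A) := by
    have e1 : X * Uᵀ * (L * X) = 0 := by
      rw [Matrix.mul_assoc, ← Matrix.mul_assoc Uᵀ, hUL]; simp
    have e2 : X * Uᵀ * U = N • X := by rw [Matrix.mul_assoc, hUU]; simp
    have e3 : U * Xᵀ * U = U * A := by rw [hA, Matrix.mul_assoc]
    have e4 : U * Xᵀ * (L * X) = U * S := by simp only [hS, Matrix.mul_assoc]
    have e5 : K * (L * X) = X - N⁻¹ • (U * A) := by
      rw [← Matrix.mul_assoc, hKL, Matrix.sub_mul, Matrix.smul_mul, Matrix.mul_assoc]; simp [hAdef]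
    rw [hR, hτ]
    simp only [Matrix.sub_mul, Matrix.add_mul, Matrix.mul_add, Matrix.smul_mul, Matrix.mul_smul,
      e1, e2, e3, e4, e5, hKU, smul_smul, mul_assoc, inv_mul_cancel₀ hN]
    match_scalars <;> (try field_simp) <;> (try ring)
  have eT : τᵀ * R * τ = (2 : ℝ) • (S + (4 * N⁻¹) • A) := by
    have : τᵀ * U = (2 : ℝ) • 1 := by
      rw [hτ]
      simp only [transpose_add, transpose_mul, transpose_smul, hL, Matrix.add_mul, Matrix.smul_mul,
        hUU, Matrix.mul_assoc, hLU, smul_smul, mul_assoc, inv_mul_cancel₀ hN]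
      simp
    rw [Matrix.mul_assoc, eRt, ← Matrix.mul_assoc, this]; simp
  have h3 : Zᵀ * U = A + (2 : ℝ) • 1 := by
    rw [hZt]
    simp only [Matrix.add_mul, Matrix.smul_mul, Matrix.mul_assoc, hLU, hUU, Matrix.mul_smul,
      smul_smul, mul_assoc, inv_mul_cancel₀ hN]
    simp
  have h4 : N • (Zᵀ * X) = N • S + A * A + (2 : ℝ) • A := by
    rw [hZt]
    simp only [Matrix.add_mul, Matrix.smul_mul, Matrix.mul_assoc A, ← hAdef, smul_add,
      smul_smul, mul_inv_cancel₀ hN, mul_left_comm N, ← hS]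
    simp
  rw [← det_mul, eRP, aux_det_main X U Z A S N hN rfl hUU h3 h4, eT]
  have : (-1 : ℝ) • (N • S + (4 : ℝ) • A) = (-N) • (S + (4 * N⁻¹) • A) := by
    rw [smul_add, smul_smul, smul_add, smul_smul, smul_smul]
    congr 2
    · ring
    · field_simp
  rw [this, det_smul, det_smul]
  have h2 : ((1/2 : ℝ)) ^ Fintype.card k * 2 ^ Fintype.card k = 1 := by
    rw [← mul_pow]; norm_num
  linear_combination (-(-2) ^ Fintype.card m * (1/4) ^ Fintype.card k * (-N) ^ Fintype.card k *
    (S + (4 * N⁻¹) • A).det) * h2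

theorem aux_detP {i k m : Type*} [Fintype i] [Fintype k] [Fintype m] [DecidableEq i]
    [DecidableEq k] [DecidableEq m]
    (L : Matrix i i ℝ) (U : Matrix i k ℝ) (e : k ⊕ m ≃ i) (N : ℝ) (hN : N ≠ 0)
    (hU : ∀ a b, U (e (Sum.inl a)) b = (1 : Matrix k k ℝ) a b)
    (hL : Lᵀ = L) (hLU : L * U = 0) (hUU : Uᵀ * U = N • 1) :
    (L + N⁻¹ • (U * Uᵀ)).det = N ^ Fintype.card k *
      (L.submatrix (fun p => e (Sum.inr p)) (fun p => e (Sum.inr p))).det := by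
  set E : Matrix m k ℝ := of fun p b => U (e (Sum.inr p)) b with hE
  set a : Matrix k k ℝ := L.submatrix (fun p => e (Sum.inl p)) (fun p => e (Sum.inl p)) with ha
  set b : Matrix k m ℝ := L.submatrix (fun p => e (Sum.inl p)) (fun p => e (Sum.inr p)) with hb
  set c : Matrix m k ℝ := L.submatrix (fun p => e (Sum.inr p)) (fun p => e (Sum.inl p)) with hc
  set d : Matrix m m ℝ := L.submatrix (fun p => e (Sum.inr p)) (fun p => e (Sum.inr p)) with hd
  have hUe : U.submatrix e id = fromRows 1 E := by
    ext p q
    cases p with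
    | inl p => simp [hU]
    | inr p => simp [hE]
  have hLe : L.submatrix e e = fromBlocks a b c d := by
    ext p q
    cases p <;> cases q <;> rfl
  have h12 : fromRows (a + b * E) (c + d * E) = 0 := by
    have : L.submatrix e e * U.submatrix e id = 0 := by
      rw [submatrix_mul_equiv, hLU]; rfl
    rw [hLe, hUe, fromBlocks_mul_fromRows] at this
    simpa using this
  have h1 : a + b * E = 0 := by
    ext p q; exact congrFun (congrFun h12 (Sum.inl p)) q
  have h2 : c + d * E = 0 := by
    ext p q; exact congrFun (congrFun h12 (Sum.inr p)) q
  have hcT : cᵀ = b := by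
    rw [hc, hb, transpose_submatrix, hL]
  have hdT : dᵀ = d := by
    rw [hd, transpose_submatrix, hL]
  have h3 : b + Eᵀ * d = 0 := by
    have := congrArg transpose h2
    simpa [hcT, hdT] using this
  have he : Eᵀ * E = (N - 1) • (1 : Matrix k k ℝ) := by
    have : (U.submatrix e id)ᵀ * U.submatrix e id = N • 1 := by
      rw [transpose_submatrix, submatrix_mul_equiv, hUU]; rfl
    rw [hUe, transpose_fromRows, fromCols_mul_fromRows, transpose_one, Matrix.one_mul] at this
    rw [sub_smul, one_smul, ← this]
    abel
  rw [← aux_detP_block a b c d E N hN he h1 h2 h3, ← det_submatrix_equiv_self e]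
  congr 1
  have : (U * Uᵀ).submatrix e e = fromBlocks 1 Eᵀ E (E * Eᵀ) := by
    have : (U * Uᵀ).submatrix e e = U.submatrix e id * (U.submatrix e id)ᵀ := by
      ext p q; simp [Matrix.mul_apply]
    rw [this, hUe, transpose_fromRows, fromRows_mul_fromCols]
    simp
  rw [submatrix_add, submatrix_smul, Pi.add_apply, Pi.add_apply, Pi.smul_apply, Pi.smul_apply,
    this, hLe, fromBlocks_smul, fromBlocks_add]

theorem aux_UU (n s : ℕ) : (oneKron n s)ᵀ * oneKron n s = (n : ℝ) • 1 := by
  ext a b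
  simp [Matrix.mul_apply, oneKron, Fintype.sum_prod_type, Matrix.one_apply]
  by_cases h : a = b
  · simp [h]
  · simp [h, Ne.symm h]

theorem aux_lap_sum {n s : ℕ} (G : SimpleGraph (Fin n)) [DecidableRel G.Adj]
    (W : Fin n → Fin n → Matrix (Fin s) (Fin s) ℝ) (i : Fin n) (a : Fin s)
    (f : Fin n × Fin s → ℝ) :
    ∑ q, lap G W (i, a) q * f q =
      ∑ j ∈ univ.filter (fun j => G.Adj i j), ∑ c, (W i j)⁻¹ a c * (f (i, c) - f (j, c)) := by
  have h : ∀ j c, lap G W (i, a) (j, c) * f (j, c) =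
      (if i = j then (∑ k ∈ univ.filter (fun k => G.Adj i k), (W i k)⁻¹ a c) * f (j, c) else 0) -
      (if G.Adj i j then (W i j)⁻¹ a c * f (j, c) else 0) := by
    intro j c
    simp only [lap, of_apply]
    by_cases hij : i = j
    · subst hij
      simp [Matrix.sum_apply]
    · by_cases hadj : G.Adj i j <;> simp [hij, hadj]
  rw [Fintype.sum_prod_type]
  simp only [h, Finset.sum_sub_distrib, mul_sub]
  congr 1
  · rw [Finset.sum_comm]
    simp only [Finset.sum_ite_eq, Finset.mem_univ, if_true, Finset.sum_mul]
    rw [Finset.sum_comm]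
  · rw [Finset.sum_filter]
    refine Finset.sum_congr rfl fun j _ => ?_
    split_ifs <;> simp

/-- `det R = (-1)^{(n-1)s} 2^{(n-3)s} det(τᵀ R τ) / χ(G)`, where `χ(G)` is the
determinant of the matrix obtained from `L` by deleting its first block row and
first block column. -/
theorem det_resist
    (n s : ℕ) (hn : 2 ≤ n) (hs : 1 ≤ s)
    (G : SimpleGraph (Fin n)) [DecidableRel G.Adj] (hconn : G.Connected)
    (W : Fin n → Fin n → Matrix (Fin s) (Fin s) ℝ)
    (hWsymm : ∀ i j, W i j = W j i)
    (hWpd : ∀ i j, G.Adj i j → (W i j).PosDef)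
    (hPSD : (lap G W).PosSemidef)
    (hrank : (lap G W).rank = n * s - s)
    (hker : ∀ v : Fin n × Fin s → ℝ,
      lap G W *ᵥ v = 0 ↔ ∃ c : Fin s → ℝ, v = oneKron n s *ᵥ c)
    (Ldag : Matrix (Fin n × Fin s) (Fin n × Fin s) ℝ)
    (hMP : IsMoorePenrose (lap G W) Ldag)
    (R : Matrix (Fin n × Fin s) (Fin n × Fin s) ℝ)
    (hR : R = resist Ldag)
    (chi : ℝ)
    (hchi : chi = ((lap G W).submatrix
      (fun p : {k : Fin n // k ≠ (⟨0, by omega⟩ : Fin n)} × Fin s => ((p.1 : Fin n), p.2))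
      (fun p : {k : Fin n // k ≠ (⟨0, by omega⟩ : Fin n)} × Fin s => ((p.1 : Fin n), p.2))).det) :
    R.det = (-1 : ℝ) ^ (((n : ℤ) - 1) * (s : ℤ)) * (2 : ℝ) ^ (((n : ℤ) - 3) * (s : ℤ)) *
      ((tauMat G W R)ᵀ * R * tauMat G W R).det / chi := by
  classical
  have hn0 : (n : ℝ) ≠ 0 := by
    have : n ≠ 0 := by omega
    exact_mod_cast this
  have hL : (lap G W)ᵀ = lap G W := by
    have := hPSD.1
    rw [IsHermitian, conjTranspose_eq_transpose_of_trivial] at this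
    exact this
  have hUU := aux_UU n s
  obtain ⟨hLU, hKU, hK, hLK, hKL⟩ :=
    aux_MP (lap G W) Ldag (oneKron n s) n hn0 hL hMP hUU hker
  have hKs : ∀ p q, Ldag p q = Ldag q p := fun p q => congrFun (congrFun hK q) p
  set X : Matrix (Fin n × Fin s) (Fin s) ℝ := of fun p b => Ldag p (p.1, b) with hX
  have hA : (oneKron n s)ᵀ * X = Xᵀ * oneKron n s := by
    ext a b
    simp only [Matrix.mul_apply, oneKron, transpose_apply, of_apply, hX, Fintype.sum_prod_type]
    refine Finset.sum_congr rfl fun i _ => ?_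
    simp [hKs (i, a) (i, b)]
  have hRX : R = X * (oneKron n s)ᵀ + oneKron n s * Xᵀ - (2 : ℝ) • Ldag := by
    rw [hR]
    ext p q
    simp [resist, Matrix.mul_apply, oneKron, hX, hKs q (q.1, p.2)]
  have hτ : tauMat G W R = lap G W * X + (2 * (n : ℝ)⁻¹) • oneKron n s := by
    ext ⟨i, a⟩ b
    have h1 : (lap G W * X) (i, a) b = _ := aux_lap_sum G W i a (fun q => X q b)
    have h2 : (lap G W * Ldag) (i, a) (i, b) = _ :=
      aux_lap_sum G W i a (fun q => Ldag q (i, b))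
    have h3 : (lap G W * Ldag) (i, a) (i, b) =
        (1 : Matrix (Fin s) (Fin s) ℝ) a b - (n : ℝ)⁻¹ * (1 : Matrix (Fin s) (Fin s) ℝ) a b := by
      rw [hLK]
      simp [Matrix.mul_apply, oneKron, Matrix.one_apply, eq_comm]
    have h4 : (∑ j ∈ univ.filter (fun j => G.Adj i j), (W i j)⁻¹ * blk R j i) a b =
        2 * (lap G W * Ldag) (i, a) (i, b) - (lap G W * X) (i, a) b := by
      rw [h1, h2, Matrix.sum_apply, Finset.mul_sum, ← Finset.sum_sub_distrib]
      refine Finset.sum_congr rfl fun j _ => ?_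
      rw [Matrix.mul_apply, Finset.mul_sum, ← Finset.sum_sub_distrib]
      refine Finset.sum_congr rfl fun c _ => ?_
      simp only [blk, hR, resist, of_apply, hX]
      ring
    have h5 : oneKron n s (i, a) b = (1 : Matrix (Fin s) (Fin s) ℝ) a b := by
      simp [oneKron, Matrix.one_apply]
    simp only [tauMat, of_apply, Matrix.sub_apply, Matrix.add_apply, Matrix.smul_apply, h4, h3, h5,
      smul_eq_mul]
    ring
  obtain ⟨hP0, hdet⟩ := aux_abstract (lap G W) Ldag R (oneKron n s) X (tauMat G W R) n hn0 hL hUU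
    hLU hKU hK hLK hKL hA hRX hτ
  set z : Fin n := ⟨0, by omega⟩ with hz
  let f : Fin s ⊕ ({k : Fin n // k ≠ z} × Fin s) → Fin n × Fin s :=
    Sum.elim (fun a => (z, a)) (fun p => ((p.1 : Fin n), p.2))
  have hf : Function.Bijective f := by
    constructor
    · rintro (a | ⟨⟨i, hi⟩, a⟩) (b | ⟨⟨j, hj⟩, b⟩) h
      · simp [f] at h; simp [h]
      · simp [f] at h; exact absurd h.1.symm hj
      · simp [f] at h; exact absurd h.1 hi
      · simp [f] at h; simp [h]
    · rintro ⟨i, a⟩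
      by_cases hi : i = z
      · exact ⟨Sum.inl a, by simp [f, hi]⟩
      · exact ⟨Sum.inr (⟨i, hi⟩, a), by simp [f]⟩
  have hP := aux_detP (lap G W) (oneKron n s) (Equiv.ofBijective f hf) n hn0
    (by intro a b; simp [f, oneKron, Matrix.one_apply]) hL hLU hUU
  have hchi' : (lap G W + (n : ℝ)⁻¹ • (oneKron n s * (oneKron n s)ᵀ)).det = (n : ℝ) ^ s * chi := by
    rw [hP, hchi, Fintype.card_fin]
    rfl
  rw [hchi'] at hP0 hdet
  have hchi0 : chi ≠ 0 := right_ne_zero_of_mul hP0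
  have z1 : (-1 : ℝ) ^ (((n : ℤ) - 1) * (s : ℤ)) = (-1) ^ (n * s) * (-1) ^ s := by
    rw [sub_mul, one_mul, zpow_sub₀ (by norm_num), ← Nat.cast_mul, zpow_natCast, zpow_natCast,
      div_eq_mul_inv, ← inv_pow]
    norm_num
  have z2 : (2 : ℝ) ^ (((n : ℤ) - 3) * (s : ℤ)) = 2 ^ (n * s) * (1/8) ^ s := by
    rw [sub_mul, zpow_sub₀ (by norm_num), ← Nat.cast_mul, zpow_natCast, _root_.zpow_mul, zpow_natCast,
      div_eq_mul_inv, ← inv_pow]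
    norm_num
  rw [z1, z2, eq_div_iff hchi0]
  rw [Fintype.card_prod, Fintype.card_fin, Fintype.card_fin] at hdet
  have hns : (n : ℝ) ^ s ≠ 0 := pow_ne_zero _ hn0
  have z3 : (-2 : ℝ) ^ (n * s) = (-1) ^ (n * s) * 2 ^ (n * s) := by
    rw [← mul_pow]; norm_num
  have z4 : (-(n : ℝ)) ^ s = (-1) ^ s * n ^ s := by
    rw [← mul_pow]; norm_num
  have z5 : (1/8 : ℝ) ^ s = (1/4) ^ s * (1/2) ^ s := by
    rw [← mul_pow]; norm_num
  rw [z3, z4] at hdet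
  rw [z5]
  apply mul_left_cancel₀ hns
  linear_combination hdet
end
end

section
/- The resistance matrix R is nonsingular, and R⁻¹ = −(1/2) L + τ (τᵀ R τ)⁻¹ τᵀ. -/
open Matrix Finset
open scoped Kronecker

noncomputable section

theorem aux_proj {n s : ℕ} (hn : 2 ≤ n) (L K : Matrix (Fin n × Fin s) (Fin n × Fin s) ℝ)
    (hker : ∀ v : Fin n × Fin s → ℝ, L *ᵥ v = 0 ↔ ∃ c : Fin s → ℝ, v = oneKron n s *ᵥ c)
    (h1 : L * K * L = L) (h4 : (K * L)ᵀ = K * L) :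
    K * L = 1 - ((1 : ℝ) / n) • (oneKron n s * (oneKron n s)ᵀ) := by
  have hLU : L * oneKron n s = 0 := by
    ext p b
    have := (hker (oneKron n s *ᵥ Pi.single b 1)).2 ⟨_, rfl⟩
    rw [mulVec_mulVec] at this
    have := congrFun this p
    simpa using this
  have hUU : (oneKron n s)ᵀ * oneKron n s = (n : ℝ) • 1 := by
    ext a b
    simp [Matrix.mul_apply, oneKron, Fintype.sum_prod_type, Matrix.one_apply, eq_comm]
    split_ifs <;> simp
  have hL0 : L * (1 - K * L) = 0 := by
    rw [Matrix.mul_sub, ← Matrix.mul_assoc, h1, Matrix.mul_one, sub_self]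
  have hC : ∃ C : Matrix (Fin s) (Fin n × Fin s) ℝ, 1 - K * L = oneKron n s * C := by
    have : ∀ q, ∃ c : Fin s → ℝ, (1 - K * L).col q = oneKron n s *ᵥ c := by
      intro q
      rw [← hker]
      ext p
      exact congrFun (congrFun hL0 p) q
    choose c hc using this
    refine ⟨Matrix.of fun b q => c q b, ?_⟩
    ext p q
    exact congrFun (hc q) p
  obtain ⟨C, hC⟩ := hC
  have hUK : (oneKron n s)ᵀ * (K * L) = 0 := by
    rw [← h4, ← Matrix.transpose_mul, Matrix.mul_assoc, hLU]; simp
  have h5 : (oneKron n s)ᵀ = (n : ℝ) • C := by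
    have := congrArg (fun Z => (oneKron n s)ᵀ * Z) hC
    simp only [Matrix.mul_sub, hUK, Matrix.mul_one, sub_zero] at this
    rw [this, ← Matrix.mul_assoc, hUU]; simp
  have hn0 : (n : ℝ) ≠ 0 := by positivity
  have : K * L = 1 - oneKron n s * C := by rw [← hC]; abel
  rw [this, h5, Matrix.mul_smul, smul_smul]
  simp [hn0]

/-- The resistance matrix `R` is nonsingular, and
`R⁻¹ = -(1/2) L + τ (τᵀ R τ)⁻¹ τᵀ`. -/
theorem resist_nonsingular_and_inv
    (n s : ℕ) (hn : 2 ≤ n) (hs : 1 ≤ s)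
    (G : SimpleGraph (Fin n)) [DecidableRel G.Adj] (hconn : G.Connected)
    (W : Fin n → Fin n → Matrix (Fin s) (Fin s) ℝ)
    (hWsymm : ∀ i j, W i j = W j i)
    (hWpd : ∀ i j, G.Adj i j → (W i j).PosDef)
    (hPSD : (lap G W).PosSemidef)
    (hrank : (lap G W).rank = n * s - s)
    (hker : ∀ v : Fin n × Fin s → ℝ,
      lap G W *ᵥ v = 0 ↔ ∃ c : Fin s → ℝ, v = oneKron n s *ᵥ c)
    (Ldag : Matrix (Fin n × Fin s) (Fin n × Fin s) ℝ)
    (hMP : IsMoorePenrose (lap G W) Ldag)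
    (R : Matrix (Fin n × Fin s) (Fin n × Fin s) ℝ)
    (hR : R = resist Ldag) :
    IsUnit R.det ∧
      R⁻¹ = -(((1 : ℝ) / 2) • lap G W) +
        tauMat G W R * ((tauMat G W R)ᵀ * R * tauMat G W R)⁻¹ * (tauMat G W R)ᵀ := by
  obtain ⟨h1, h2, h3, h4⟩ := hMP
  have hn0 : (n : ℝ) ≠ 0 := by positivity
  have hnpos : (0 : ℝ) < n := by positivity
  have hLR0 : tauMat G W R = (2 : ℝ) • oneKron n s +
      Matrix.of (fun p b => (lap G W * R) p (p.1, b)) := by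
    ext p b
    obtain ⟨i, a⟩ := p
    have hRii : ∀ x y, R (i, x) (i, y) = 0 := by
      intro x y; simp [hR, resist]; ring
    simp only [tauMat, Matrix.of_apply, Matrix.sub_apply, Matrix.add_apply, Matrix.smul_apply,
      Matrix.sum_apply, Matrix.mul_apply, Fintype.sum_prod_type, oneKron, Matrix.one_apply,
      sub_eq_add_neg, blk]
    congr 1
    rw [Finset.sum_filter, ← Finset.sum_neg_distrib]
    refine Finset.sum_congr rfl fun j _ => ?_
    by_cases hij : i = j
    · subst hij
      simp [hRii]
    · by_cases hadj : G.Adj i j <;> simp [lap, hij, hadj]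
  have hLT : (lap G W)ᵀ = lap G W := by simpa using hPSD.1.eq
  generalize tauMat G W R = τ at *
  generalize lap G W = L at *
  have hKL := aux_proj hn L Ldag hker h1 h4
  have hKtL := aux_proj hn L Ldagᵀ hker
    (by have := congrArg Matrix.transpose h1
        simpa [Matrix.transpose_mul, hLT, Matrix.mul_assoc] using this)
    (by have := h3
        simp only [Matrix.transpose_mul, hLT, Matrix.transpose_transpose] at this ⊢
        exact this.symm)
  have hLK : L * Ldag = Ldag * L := by
    rw [← h3, Matrix.transpose_mul, hLT, hKtL, hKL]
  have hKT : Ldagᵀ = Ldag := by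
    have e1 : Ldagᵀ = Ldagᵀ * L * Ldagᵀ := by
      have := congrArg Matrix.transpose h2
      simpa [Matrix.transpose_mul, hLT, Matrix.mul_assoc] using this.symm
    have e2 : L * Ldagᵀ = L * Ldag := by
      rw [hLK, ← h4, Matrix.transpose_mul, hLT]
    rw [e1, Matrix.mul_assoc, e2, ← Matrix.mul_assoc, hKtL, ← hKL, h2]
  have hKpsd : Ldag.PosSemidef := by
    have := hPSD.conjTranspose_mul_mul_same Ldag
    rw [Matrix.conjTranspose_eq_transpose_of_trivial, hKT, h2] at this
    exact this
  have hLU : L * oneKron n s = 0 := by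
    ext p b
    have := (hker (oneKron n s *ᵥ Pi.single b 1)).2 ⟨_, rfl⟩
    rw [mulVec_mulVec] at this
    have := congrFun this p
    simpa using this
  have hUL : (oneKron n s)ᵀ * L = 0 := by
    have := congrArg Matrix.transpose hLU
    simpa [Matrix.transpose_mul, hLT] using this
  have hKU : Ldag * oneKron n s = 0 := by
    rw [← h2, Matrix.mul_assoc Ldag, hLK, Matrix.mul_assoc, Matrix.mul_assoc, hLU]; simp
  have hUU : (oneKron n s)ᵀ * oneKron n s = (n : ℝ) • 1 := by
    ext a b
    simp [Matrix.mul_apply, oneKron, Fintype.sum_prod_type, Matrix.one_apply, eq_comm]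
    split_ifs <;> simp
  have hsym : ∀ p q, Ldag p q = Ldag q p := fun p q => congrFun (congrFun hKT q) p
  obtain ⟨M, hM⟩ : ∃ M : Matrix (Fin n × Fin s) (Fin s) ℝ,
    M = Matrix.of fun p b => Ldag (p.1, p.2) (p.1, b) := ⟨_, rfl⟩
  have hRM : R = M * (oneKron n s)ᵀ + oneKron n s * Mᵀ - (2 : ℝ) • Ldag := by
    ext p q
    simp [hR, resist, hM, Matrix.mul_apply, oneKron]
    exact hsym _ _
  have hUM : (oneKron n s)ᵀ * M = ∑ i, blk Ldag i i := by
    ext a b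
    simp [hM, Matrix.mul_apply, oneKron, Matrix.sum_apply, blk, Fintype.sum_prod_type]
  have hblk : ∀ i, (blk Ldag i i).PosDef := by
    intro i
    have hps : (blk Ldag i i).PosSemidef := hKpsd.submatrix (fun a => (i, a))
    refine Matrix.PosDef.of_dotProduct_mulVec_pos hps.1 ?_
    intro c hc
    refine lt_of_le_of_ne (hps.dotProduct_mulVec_nonneg c) ?_
    intro h0
    apply hc
    let v : Fin n × Fin s → ℝ := fun p => if p.1 = i then c p.2 else 0
    have hv : star v ⬝ᵥ (Ldag *ᵥ v) = 0 := by
      rw [h0]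
      simp [v, dotProduct, Matrix.mulVec, Fintype.sum_prod_type, blk, ite_mul, mul_ite,
        Finset.sum_ite_irrel]
    rw [hKpsd.dotProduct_mulVec_zero_iff] at hv
    have hw : v = oneKron n s *ᵥ (((1 : ℝ) / n) • ((oneKron n s)ᵀ *ᵥ v)) := by
      have e : (L * Ldag) *ᵥ v = 0 := by rw [← Matrix.mulVec_mulVec, hv]; simp
      rw [hLK, hKL, Matrix.sub_mulVec, Matrix.one_mulVec, sub_eq_zero] at e
      rw [Matrix.mulVec_smul, Matrix.mulVec_mulVec, ← Matrix.smul_mulVec]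
      exact e
    generalize ((1 : ℝ) / n) • ((oneKron n s)ᵀ *ᵥ v) = d at hw
    have hvd : ∀ p, v p = d p.2 := by
      intro p
      rw [hw]; simp [oneKron, Matrix.mulVec, dotProduct]
    have : Nontrivial (Fin n) := Fin.nontrivial_iff_two_le.2 hn
    obtain ⟨j, hj⟩ := exists_ne i
    ext a
    have a1 := hvd (i, a)
    have a2 := hvd (j, a)
    simp [v, hj] at a1 a2
    simp [a1, ← a2]
  have hSpd : ((oneKron n s)ᵀ * M).PosDef := by
    rw [hUM]
    have : Nonempty (Fin n) := ⟨⟨0, by omega⟩⟩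
    exact Matrix.posDef_sum Finset.univ_nonempty (fun i _ => hblk i)
  have hSsym : Mᵀ * oneKron n s = (oneKron n s)ᵀ * M := by
    have := hSpd.1.eq
    simpa [Matrix.transpose_mul] using this
  have hLR1 : L * R = (L * M) * (oneKron n s)ᵀ - (2 : ℝ) • 1 +
      ((2 : ℝ) / n) • (oneKron n s * (oneKron n s)ᵀ) := by
    rw [hRM, Matrix.mul_sub, Matrix.mul_add, ← Matrix.mul_assoc, ← Matrix.mul_assoc, hLU,
      Matrix.mul_smul, hLK, hKL, Matrix.zero_mul, add_zero, smul_sub, smul_smul,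
      show (2 : ℝ) * (1 / n) = 2 / n by ring]
    abel
  have hτ : τ = L * M + ((2 : ℝ) / n) • oneKron n s := by
    rw [hLR0, hLR1]
    generalize L * M = Z
    ext p b
    simp [Matrix.add_apply, Matrix.mul_apply, oneKron, Matrix.one_apply, Prod.ext_iff]
    try (split_ifs <;> simp_all <;> ring)
  have hLR : L * R = τ * (oneKron n s)ᵀ - (2 : ℝ) • 1 := by
    rw [hLR1, hτ, Matrix.add_mul, Matrix.smul_mul]; abel
  have hRT : Rᵀ = R := by
    rw [hRM]
    simp [Matrix.transpose_mul, hKT, add_comm]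
  have hRL : R * L = oneKron n s * τᵀ - (2 : ℝ) • 1 := by
    have := congrArg Matrix.transpose hLR
    simpa [Matrix.transpose_mul, hLT, hRT] using this
  have hUτ : (oneKron n s)ᵀ * τ = (2 : ℝ) • 1 := by
    rw [hτ, Matrix.mul_add, ← Matrix.mul_assoc, hUL, Matrix.mul_smul, hUU, smul_smul,
      div_mul_cancel₀ _ hn0]
    simp
  have hτU : τᵀ * oneKron n s = (2 : ℝ) • 1 := by
    have := congrArg Matrix.transpose hUτ
    simpa [Matrix.transpose_mul] using this
  obtain ⟨X, hX⟩ : ∃ X, X = Mᵀ * L * M + ((4 : ℝ) / n) • ((oneKron n s)ᵀ * M) := ⟨_, rfl⟩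
  have hXpd : X.PosDef := by
    rw [hX]
    have e1 := hPSD.conjTranspose_mul_mul_same M
    rw [Matrix.conjTranspose_eq_transpose_of_trivial] at e1
    exact Matrix.PosDef.posSemidef_add e1 (hSpd.smul (by positivity))
  have hRτ : R * τ = oneKron n s * X := by
    have e1 : Ldag * τ = M - ((1 : ℝ) / n) • (oneKron n s * ((oneKron n s)ᵀ * M)) := by
      rw [hτ, Matrix.mul_add, ← Matrix.mul_assoc, hKL, Matrix.mul_smul, hKU, Matrix.sub_mul,
        Matrix.smul_mul, Matrix.mul_assoc]
      simp
    have e2 : Mᵀ * τ = Mᵀ * L * M + ((2 : ℝ) / n) • ((oneKron n s)ᵀ * M) := by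
      rw [hτ, Matrix.mul_add, Matrix.mul_smul, hSsym, Matrix.mul_assoc]
    rw [hRM, Matrix.sub_mul, Matrix.add_mul, Matrix.mul_assoc, hUτ, Matrix.mul_assoc, e2,
      Matrix.smul_mul, e1, hX, Matrix.mul_add, Matrix.mul_add]
    simp only [Matrix.mul_smul, Matrix.mul_one]
    module
  have hτRτ : τᵀ * R * τ = (2 : ℝ) • X := by
    rw [Matrix.mul_assoc, hRτ, ← Matrix.mul_assoc, hτU]; simp
  have hXu : IsUnit ((2 : ℝ) • X).det := by
    have := (hXpd.smul (show (0 : ℝ) < 2 by norm_num)).det_pos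
    exact this.ne'.isUnit
  have hinv : R * (-(((1 : ℝ) / 2) • L) + τ * (τᵀ * R * τ)⁻¹ * τᵀ) = 1 := by
    have e : X * ((2 : ℝ) • X)⁻¹ = ((1 : ℝ) / 2) • 1 := by
      have := Matrix.mul_nonsing_inv _ hXu
      rw [Matrix.smul_mul] at this
      rw [← this, smul_smul]; norm_num
    rw [hτRτ, Matrix.mul_add, Matrix.mul_neg, Matrix.mul_smul, hRL, ← Matrix.mul_assoc,
      ← Matrix.mul_assoc, hRτ, Matrix.mul_assoc (oneKron n s), e]
    simp only [Matrix.mul_smul, Matrix.smul_mul, Matrix.mul_one]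
    module
  exact ⟨Matrix.isUnit_det_of_right_inverse hinv, Matrix.inv_eq_right_inv hinv⟩
end
end
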